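/- Let A be an n×n real matrix (n ≥ 1) with all entries positive, with rows a_1, …, a_n, and let v ∈ ℝⁿ be the vector with entries v_i = (1 + ‖a_i‖₁)/Σ_{j=1}^n (1 + ‖a_j‖₁). Then v is a fixed point of the ◊-MAPI iteration: (A ◊ v)/‖A ◊ v‖₁ = v. -/

import Mathlib

/-! The ◊ product of two vectors with the same sign pattern is the sum of their ℓ1 norms. So for `w`
positive with `‖w‖₁ = 1`, `A ◊ w` is the vector `u i = 1 + ‖A i‖₁`, whatever `w` is: one iteration
sends every such `w`, in particular `u / ‖u‖₁` itself, to `u / ‖u‖₁`. -/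

/-- ◊ product: `w ◊ x = ∑ i, (sign (x i) * w i + x i * sign (w i))`. -/
noncomputable def diamondProd {n : ℕ} (w x : Fin n → ℝ) : ℝ :=
  ∑ i, (Real.sign (x i) * w i + x i * Real.sign (w i))

/-- `A ◊ w`: the vector whose i-th entry is the ◊ product of the i-th row of `A` with `w`. -/
noncomputable def matDiamond {n : ℕ} (A : Matrix (Fin n) (Fin n) ℝ) (w : Fin n → ℝ) : Fin n → ℝ :=
  fun i => diamondProd (A i) w

/-- ℓ1 norm of a vector in ℝⁿ. -/
def l1Norm {n : ℕ} (x : Fin n → ℝ) : ℝ := ∑ i, |x i|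

section

variable {n : ℕ} {w x : Fin n → ℝ}

theorem l1Norm_nonneg (x : Fin n → ℝ) : 0 ≤ l1Norm x :=
  Finset.sum_nonneg fun i _ => abs_nonneg (x i)

theorem l1Norm_pos_of_apply_ne_zero {i : Fin n} (hi : x i ≠ 0) : 0 < l1Norm x :=
  Finset.sum_pos' (fun j _ => abs_nonneg (x j)) ⟨i, Finset.mem_univ i, abs_pos.mpr hi⟩

theorem l1Norm_of_nonneg (hx : ∀ i, 0 ≤ x i) : l1Norm x = ∑ i, x i :=
  Finset.sum_congr rfl fun i _ => abs_of_nonneg (hx i)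

theorem l1Norm_div (x : Fin n → ℝ) (c : ℝ) : l1Norm (fun i => x i / c) = l1Norm x / |c| := by
  simp only [l1Norm, abs_div, Finset.sum_div]

theorem l1Norm_div_l1Norm (hx : l1Norm x ≠ 0) : l1Norm (fun i => x i / l1Norm x) = 1 := by
  rw [l1Norm_div, abs_of_nonneg (l1Norm_nonneg x), div_self hx]

theorem real_sign_mul_self (r : ℝ) : Real.sign r * r = |r| := by
  rcases lt_trichotomy r 0 with hr | rfl | hr
  · rw [Real.sign_of_neg hr, abs_of_neg hr, neg_one_mul]
  · rw [mul_zero, abs_zero]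
  · rw [Real.sign_of_pos hr, abs_of_pos hr, one_mul]

theorem diamondProd_of_sign_eq (h : ∀ i, Real.sign (w i) = Real.sign (x i)) :
    diamondProd w x = l1Norm w + l1Norm x := by
  rw [diamondProd, l1Norm, l1Norm, ← Finset.sum_add_distrib]
  refine Finset.sum_congr rfl fun i _ => ?_
  rw [← real_sign_mul_self (w i), ← real_sign_mul_self (x i), h i, mul_comm (x i)]

theorem matDiamond_of_pos {A : Matrix (Fin n) (Fin n) ℝ} (hA : ∀ i j, 0 < A i j)
    (hw : ∀ i, 0 < w i) : matDiamond A w = fun i => l1Norm (A i) + l1Norm w :=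
  funext fun i => diamondProd_of_sign_eq fun j => by
    rw [Real.sign_of_pos (hA i j), Real.sign_of_pos (hw j)]

end

theorem mapi_fixed_point {n : ℕ} (hn : 1 ≤ n) (A : Matrix (Fin n) (Fin n) ℝ)
    (hA : ∀ i j, 0 < A i j)
    (v : Fin n → ℝ)
    (hv : v = fun i => (1 + l1Norm (A i)) / ∑ j, (1 + l1Norm (A j))) :
    (fun i => matDiamond A v i / l1Norm (matDiamond A v)) = v := by
  let u : Fin n → ℝ := fun i => 1 + l1Norm (A i)
  have hu : ∀ i, 0 < u i := fun i => add_pos_of_pos_of_nonneg one_pos (l1Norm_nonneg (A i))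
  have hu_norm : 0 < l1Norm u := l1Norm_pos_of_apply_ne_zero (hu ⟨0, hn⟩).ne'
  have hv_eq : v = fun i => u i / l1Norm u := by
    rw [hv, l1Norm_of_nonneg fun i => (hu i).le]
  have hv_pos : ∀ i, 0 < v i := fun i => hv_eq ▸ div_pos (hu i) hu_norm
  have hv_norm : l1Norm v = 1 := hv_eq ▸ l1Norm_div_l1Norm hu_norm.ne'
  have hAv : matDiamond A v = u := by
    simp only [matDiamond_of_pos hA hv_pos, hv_norm, add_comm, u]
  rw [hAv, hv_eq]
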